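/- Pappus implies Dandelin–Gallucci. Let rk be a rank function satisfying the full 3D projective rank axiom system: (A1)–(A4); (A5) rk{P,Q} = 2 whenever P ≠ Q; (A6) for all points A, B, C, D with rk{A,B,C,D} ≤ 3 there exists J with rk{A,B,J} = 2 and rk{C,D,J} = 2; (A7) for all points A, B there exists C with rk{A,B,C} = rk{B,C} = rk{A,C} = 2; (A8) there exist points P₁, P₂, P₃, P₄ with rk{P₁,P₂,P₃,P₄} = 4; (A9) rk X ≤ 4 for every finite set X; (A10) for all A, B, C, A', B' with rk{A,B,C} = 3 and rk{A',B'} = 2 there exists M with rk{A,B,C,M} = 3 and rk{A',B',M} = 2. If rk satisfies the Pappus rank property, then rk satisfies the Dandelin–Gallucci rank property. -/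

import Mathlib

/-- Pappus rank property: for two triples of collinear, pairwise distinct
points on two distinct lines, the three intersection points of the cross
lines are collinear. -/
def PappusRank {Pt : Type*} [DecidableEq Pt] (rk : Finset Pt → ℕ) : Prop :=
  ∀ A B C A' B' C' X Y Z : Pt,
    rk {A, B, C} ≤ 2 → rk {A', B', C'} ≤ 2 →
    rk {A, B} = 2 → rk {A, C} = 2 → rk {B, C} = 2 →
    rk {A', B'} = 2 → rk {A', C'} = 2 → rk {B', C'} = 2 →
    rk {A, A'} = 2 → rk {A, B'} = 2 → rk {A, C'} = 2 →
    rk {B, A'} = 2 → rk {B, B'} = 2 → rk {B, C'} = 2 →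
    rk {C, A'} = 2 → rk {C, B'} = 2 → rk {C, C'} = 2 →
    3 ≤ rk {A, B, C, A', B', C'} →
    rk {A, B', X} ≤ 2 → rk {A', B, X} ≤ 2 →
    rk {A, C', Y} ≤ 2 → rk {A', C, Y} ≤ 2 →
    rk {B, C', Z} ≤ 2 → rk {B', C, Z} ≤ 2 →
    rk {X, Y, Z} ≤ 2

/-- A line is represented by an ordered pair of distinct points. -/
def IsLineRk {Pt : Type*} [DecidableEq Pt] (rk : Finset Pt → ℕ) (l : Pt × Pt) : Prop :=
  rk {l.1, l.2} = 2

/-- Two lines meet (are coplanar). -/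
def MeetRk {Pt : Type*} [DecidableEq Pt] (rk : Finset Pt → ℕ) (l m : Pt × Pt) : Prop :=
  rk {l.1, l.2, m.1, m.2} ≤ 3

/-- Two lines are skew. -/
def SkewRk {Pt : Type*} [DecidableEq Pt] (rk : Finset Pt → ℕ) (l m : Pt × Pt) : Prop :=
  rk {l.1, l.2, m.1, m.2} = 4

/-- Dandelin–Gallucci rank property: given lines a, b, c pairwise skew and
e, f, g pairwise skew such that every line among a, b, c meets every line
among e, f, g, any line d meeting e, f, g meets any line h meeting a, b, c. -/
def DGRank {Pt : Type*} [DecidableEq Pt] (rk : Finset Pt → ℕ) : Prop :=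
  ∀ a b c e f g d h : Pt × Pt,
    IsLineRk rk a → IsLineRk rk b → IsLineRk rk c →
    IsLineRk rk e → IsLineRk rk f → IsLineRk rk g →
    IsLineRk rk d → IsLineRk rk h →
    SkewRk rk a b → SkewRk rk a c → SkewRk rk b c →
    SkewRk rk e f → SkewRk rk e g → SkewRk rk f g →
    MeetRk rk a e → MeetRk rk a f → MeetRk rk a g →
    MeetRk rk b e → MeetRk rk b f → MeetRk rk b g →
    MeetRk rk c e → MeetRk rk c f → MeetRk rk c g →
    MeetRk rk d e → MeetRk rk d f → MeetRk rk d g →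
    MeetRk rk h a → MeetRk rk h b → MeetRk rk h c →
    MeetRk rk d h


structure RkAx {Pt : Type*} [DecidableEq Pt] (rk : Finset Pt → ℕ) : Prop where
  a1 : ∀ X : Finset Pt, rk X ≤ X.card
  a2 : ∀ X Y : Finset Pt, X ⊆ Y → rk X ≤ rk Y
  a3 : ∀ X Y : Finset Pt, rk (X ∪ Y) + rk (X ∩ Y) ≤ rk X + rk Y
  a4 : ∀ p : Pt, rk {p} = 1
  a5 : ∀ p q : Pt, p ≠ q → rk {p, q} = 2
  a6 : ∀ A B C D : Pt, rk {A, B, C, D} ≤ 3 →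
      ∃ J : Pt, rk {A, B, J} = 2 ∧ rk {C, D, J} = 2
  a10 : ∀ A B C A' B' : Pt, rk {A, B, C} = 3 → rk {A', B'} = 2 →
      ∃ M : Pt, rk {A, B, C, M} = 3 ∧ rk {A', B', M} = 2

/-- Membership in the flat spanned by a finite set. -/
def InCl {Pt : Type*} [DecidableEq Pt] (rk : Finset Pt → ℕ) (S : Finset Pt) (p : Pt) : Prop :=
  rk (insert p S) ≤ rk S

/-- The two points representing a line. -/
def LL {Pt : Type*} [DecidableEq Pt] (l : Pt × Pt) : Finset Pt := {l.1, l.2}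

section helpers

variable {Pt : Type*} [DecidableEq Pt] {rk : Finset Pt → ℕ}

theorem four_eq (l m : Pt × Pt) : ({l.1, l.2, m.1, m.2} : Finset Pt) = LL l ∪ LL m := by
  ext x; simp [LL]; tauto

theorem RkAx.mem (_H : RkAx rk) {S : Finset Pt} {p : Pt} (h : p ∈ S) : InCl rk S p := by
  unfold InCl; rw [Finset.insert_eq_of_mem h]

theorem RkAx.union_le (H : RkAx rk) {S T : Finset Pt} (h : ∀ p ∈ T, InCl rk S p) :
    rk (S ∪ T) ≤ rk S := by
  induction T using Finset.induction_on with
  | empty => simp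
  | insert p T hp ih =>
    have h1 := ih (fun q hq => h q (Finset.mem_insert_of_mem hq))
    have h2 : rk (insert p S) ≤ rk S := h p (Finset.mem_insert_self _ _)
    have h3 := H.a3 (insert p S) (S ∪ T)
    have h4 := H.a2 (S ∪ insert p T) (insert p S ∪ (S ∪ T)) (by clear * -; intro x; simp; try tauto)
    have h5 := H.a2 S (insert p S ∩ (S ∪ T)) (by intro x hx; simp [hx])
    omega

theorem RkAx.rk_le (H : RkAx rk) {S T : Finset Pt} (h : ∀ p ∈ T, InCl rk S p) :
    rk T ≤ rk S :=
  (H.a2 _ _ Finset.subset_union_right).trans (H.union_le h)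

theorem RkAx.trans (H : RkAx rk) {S T : Finset Pt} (h : ∀ p ∈ T, InCl rk S p) {p : Pt}
    (hp : InCl rk T p) : InCl rk S p := by
  have h1 := H.union_le h
  have h2 : rk (insert p T) ≤ rk T := hp
  have h3 := H.a3 (insert p T) (S ∪ T)
  have h4 := H.a2 (insert p S) (insert p T ∪ (S ∪ T)) (by clear * -; intro x; simp; try tauto)
  have h5 := H.a2 T (insert p T ∩ (S ∪ T)) (by clear * -; intro x; simp; try tauto)
  unfold InCl
  omega

theorem RkAx.mono (H : RkAx rk) {S T : Finset Pt} (h : T ⊆ S) {p : Pt}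
    (hp : InCl rk T p) : InCl rk S p :=
  H.trans (fun _ hq => H.mem (h hq)) hp

theorem RkAx.exch (H : RkAx rk) {S T : Finset Pt} (h : ∀ p ∈ T, InCl rk S p)
    (hr : rk S ≤ rk T) {p : Pt} (hp : InCl rk S p) : InCl rk T p := by
  have : rk (insert p T) ≤ rk S := H.rk_le (by
    intro q hq
    rcases Finset.mem_insert.1 hq with rfl | hq
    · exact hp
    · exact h q hq)
  unfold InCl
  omega

theorem RkAx.inter (H : RkAx rk) {S S' T : Finset Pt} (h : ∀ p ∈ T, InCl rk S p)
    (h' : ∀ p ∈ T, InCl rk S' p) : rk T + rk (S ∪ S') ≤ rk S + rk S' := by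
  have h1 := H.union_le h
  have h2 := H.union_le h'
  have h3 := H.a3 (S ∪ T) (S' ∪ T)
  have h4 := H.a2 (S ∪ S') ((S ∪ T) ∪ (S' ∪ T)) (by clear * -; intro x; simp; try tauto)
  have h5 := H.a2 T ((S ∪ T) ∩ (S' ∪ T)) (by clear * -; intro x; simp; try tauto)
  omega

theorem RkAx.pair_le (H : RkAx rk) (p q : Pt) : rk {p, q} ≤ 2 :=
  (H.a1 _).trans Finset.card_le_two

theorem RkAx.eq_of (H : RkAx rk) {p q : Pt} (h : rk {p, q} ≤ 1) : p = q := by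
  by_contra hne
  have := H.a5 p q hne
  omega

theorem RkAx.ne_of (H : RkAx rk) {p q : Pt} (h : rk {p, q} = 2) : p ≠ q := by
  rintro rfl
  have := H.a4 p
  simp at h
  omega

/-- third point of a collinear triple lies on the line of the first two -/
theorem RkAx.third (H : RkAx rk) {p q r : Pt} (hne : p ≠ q) (h : rk {p, q, r} ≤ 2) :
    InCl rk {p, q} r := by
  have := H.a5 p q hne
  have e : (insert r {p, q} : Finset Pt) = {p, q, r} := by clear * -; ext x; simp; tauto
  unfold InCl
  rw [e]; omega

theorem RkAx.no_common (H : RkAx rk) {l m : Pt × Pt} (hs : rk (LL l ∪ LL m) = 4) {p : Pt}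
    (h : InCl rk (LL l) p) (h' : InCl rk (LL m) p) : False := by
  have h1 := H.inter (T := {p}) (S := LL l) (S' := LL m) (by simpa using h) (by simpa using h')
  have := H.a4 p
  have := H.pair_le l.1 l.2
  have := H.pair_le m.1 m.2
  unfold LL at *
  omega

theorem RkAx.ne_of_skew (H : RkAx rk) {l m : Pt × Pt} (hs : rk (LL l ∪ LL m) = 4) {p q : Pt}
    (h : InCl rk (LL l) p) (h' : InCl rk (LL m) q) : p ≠ q := by
  rintro rfl
  exact H.no_common hs h h'

/-- a line with two points in a flat lies in the flat -/
theorem RkAx.line_in (H : RkAx rk) {l : Pt × Pt} {S : Finset Pt} {p q : Pt}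
    (hne : p ≠ q) (hp : InCl rk (LL l) p) (hq : InCl rk (LL l) q)
    (hp' : InCl rk S p) (hq' : InCl rk S q) {x : Pt} (hx : InCl rk (LL l) x) : InCl rk S x := by
  have h1 := H.a5 p q hne
  have h2 : rk (LL l) ≤ 2 := H.pair_le l.1 l.2
  have : InCl rk {p, q} x := H.exch (S := LL l) (by simp [hp, hq]) (by omega) hx
  exact H.trans (by simp [hp', hq']) this

theorem RkAx.bad (H : RkAx rk) {l m : Pt × Pt} (hs : rk (LL l ∪ LL m) = 4) {S : Finset Pt}
    (hS : rk S ≤ 3) {p q : Pt}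
    (hne : p ≠ q) (hp : InCl rk (LL l) p) (hq : InCl rk (LL l) q)
    (hp' : InCl rk S p) (hq' : InCl rk S q)
    (hm : ∀ x, InCl rk (LL m) x → InCl rk S x) : False := by
  have : rk (LL l ∪ LL m) ≤ rk S := H.rk_le (by
    intro x hx
    rcases Finset.mem_union.1 hx with hx | hx
    · exact H.line_in hne hp hq hp' hq' (H.mem hx)
    · exact hm x (H.mem hx))
  omega

theorem RkAx.meet_pt (H : RkAx rk) {l m : Pt × Pt} (hl : rk (LL l) = 2) (hm : rk (LL m) = 2)
    (h : rk (LL l ∪ LL m) ≤ 3) : ∃ p, InCl rk (LL l) p ∧ InCl rk (LL m) p := by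
  rw [← four_eq] at h
  obtain ⟨J, h1, h2⟩ := H.a6 _ _ _ _ h
  exact ⟨J, H.third (H.ne_of hl) h1.le, H.third (H.ne_of hm) h2.le⟩

/-- a line and a plane have a common point -/
theorem RkAx.plane_line (H : RkAx rk) {l m : Pt × Pt} (hl : rk (LL l) = 2)
    (h3 : rk (LL l ∪ LL m) = 3) {p q : Pt} (hpq : p ≠ q) :
    ∃ M, InCl rk (LL l ∪ LL m) M ∧ InCl rk {p, q} M := by
  have : ∃ s ∈ LL m, ¬ InCl rk (LL l) s := by
    by_contra hcon
    push Not at hcon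
    have := H.union_le hcon
    omega
  obtain ⟨s, hs, hns⟩ := this
  have e : (insert s (LL l) : Finset Pt) = {l.1, l.2, s} := by ext x; simp [LL]; tauto
  have hsub : (insert s (LL l) : Finset Pt) ⊆ LL l ∪ LL m := by
    intro x hx
    rcases Finset.mem_insert.1 hx with rfl | hx
    · exact Finset.mem_union_right _ hs
    · exact Finset.mem_union_left _ hx
  have hr := H.a2 _ _ hsub
  unfold InCl at hns
  have hr3 : rk {l.1, l.2, s} = 3 := by rw [← e]; omega
  obtain ⟨M, hM1, hM2⟩ := H.a10 _ _ _ p q hr3 (H.a5 _ _ hpq)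
  refine ⟨M, ?_, H.third hpq hM2.le⟩
  refine H.mono hsub ?_
  have e2 : (insert M (insert s (LL l)) : Finset Pt) = {l.1, l.2, s, M} := by
    ext x; simp [LL]; tauto
  unfold InCl
  rw [e2, e]; omega

set_option maxHeartbeats 1000000 in
/-- The generic case: eight lines, all pairs in each family skew. -/
theorem RkAx.main (H : RkAx rk) (hP : PappusRank rk) {a b c d e f g h : Pt × Pt}
    (la : rk (LL a) = 2) (ld : rk (LL d) = 2)
    (ab : rk (LL a ∪ LL b) = 4) (ac : rk (LL a ∪ LL c) = 4) (bc : rk (LL b ∪ LL c) = 4)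
    (ad : rk (LL a ∪ LL d) = 4) (bd : rk (LL b ∪ LL d) = 4) (cd : rk (LL c ∪ LL d) = 4)
    (ef : rk (LL e ∪ LL f) = 4) (eg : rk (LL e ∪ LL g) = 4) (fg : rk (LL f ∪ LL g) = 4)
    (fh : rk (LL f ∪ LL h) = 4) (gh : rk (LL g ∪ LL h) = 4)
    (mag : rk (LL a ∪ LL g) ≤ 3) (mah : rk (LL a ∪ LL h) ≤ 3)
    (mbf : rk (LL b ∪ LL f) ≤ 3) (mbh : rk (LL b ∪ LL h) ≤ 3)
    (mcf : rk (LL c ∪ LL f) ≤ 3) (mcg : rk (LL c ∪ LL g) ≤ 3)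
    (mde : rk (LL d ∪ LL e) ≤ 3)
    {A B C A' B' p12 p13 p23 p33 p34 : Pt}
    (A1 : InCl rk (LL a) A) (A2 : InCl rk (LL e) A)
    (B1 : InCl rk (LL b) B) (B2 : InCl rk (LL e) B)
    (C1 : InCl rk (LL c) C) (C2 : InCl rk (LL e) C)
    (A'1 : InCl rk (LL d) A') (A'2 : InCl rk (LL f) A')
    (B'1 : InCl rk (LL d) B') (B'2 : InCl rk (LL g) B')
    (p12a : InCl rk (LL a) p12) (p12f : InCl rk (LL f) p12)
    (p13a : InCl rk (LL a) p13) (p13g : InCl rk (LL g) p13)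
    (p23b : InCl rk (LL b) p23) (p23g : InCl rk (LL g) p23)
    (p33c : InCl rk (LL c) p33) (p33g : InCl rk (LL g) p33)
    (p34c : InCl rk (LL c) p34) (p34h : InCl rk (LL h) p34) :
    rk (LL d ∪ LL h) ≤ 3 := by
  have inl : ∀ (l m : Pt × Pt) {x : Pt}, InCl rk (LL l) x → InCl rk (LL l ∪ LL m) x :=
    fun l m x hx => H.mono Finset.subset_union_left hx
  have inr : ∀ (l m : Pt × Pt) {x : Pt}, InCl rk (LL m) x → InCl rk (LL l ∪ LL m) x :=
    fun l m x hx => H.mono Finset.subset_union_right hx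
  have nAB := H.ne_of_skew ab A1 B1
  have nAC := H.ne_of_skew ac A1 C1
  have nBC := H.ne_of_skew bc B1 C1
  have nA'B' := H.ne_of_skew fg A'2 B'2
  have n1223 := H.ne_of_skew ab p12a p23b
  have n1234 := H.ne_of_skew ac p12a p34c
  have n2334 := H.ne_of_skew bc p23b p34c
  have rde : rk (LL d ∪ LL e) = 3 := by
    by_contra hne
    have hle : rk (LL d ∪ LL e) ≤ 2 := by omega
    exact H.no_common ad A1 (H.exch (S := LL d ∪ LL e) (fun x hx => inl d e (H.mem hx))
      (by omega) (inr d e A2))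
  have rah : rk (LL a ∪ LL h) = 3 := by
    by_contra hne
    have hle : rk (LL a ∪ LL h) ≤ 2 := by omega
    exact H.no_common ac (H.exch (S := LL a ∪ LL h) (fun x hx => inl a h (H.mem hx))
      (by omega) (inr a h p34h)) p34c
  obtain ⟨X, Xpi, Xl⟩ := H.plane_line ld rde n1223
  obtain ⟨Y, Ypi, Yl⟩ := H.plane_line ld rde n1234
  obtain ⟨Z, Zpi, Zl⟩ := H.plane_line ld rde n2334
  obtain ⟨C', C'ah, C'd⟩ := H.plane_line la rah (H.ne_of ld)
  have C'1 : InCl rk (LL d) C' := C'd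
  have col : ∀ {l m k n : Pt × Pt} {x y z : Pt}, rk (LL l ∪ LL m) ≤ 3 → rk (LL k ∪ LL n) ≤ 3 →
      rk (LL l ∪ LL k) = 4 →
      InCl rk (LL l ∪ LL m) x → InCl rk (LL l ∪ LL m) y → InCl rk (LL l ∪ LL m) z →
      InCl rk (LL k ∪ LL n) x → InCl rk (LL k ∪ LL n) y → InCl rk (LL k ∪ LL n) z →
      rk {x, y, z} ≤ 2 := by
    intro l m k n x y z h1 h2 h3 x1 y1 z1 x2 y2 z2
    have h4 := H.inter (T := {x, y, z}) (S := LL l ∪ LL m) (S' := LL k ∪ LL n)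
      (by simp [x1, y1, z1]) (by simp [x2, y2, z2])
    have h5 := H.a2 (LL l ∪ LL k) ((LL l ∪ LL m) ∪ (LL k ∪ LL n)) (by clear * -; intro x; simp; try tauto)
    omega
  have Xag : InCl rk (LL a ∪ LL g) X :=
    H.trans (by simp [inl a g p12a, inr a g p23g]) Xl
  have Xbf : InCl rk (LL b ∪ LL f) X :=
    H.trans (by simp [inr b f p12f, inl b f p23b]) Xl
  have Yah : InCl rk (LL a ∪ LL h) Y :=
    H.trans (by simp [inl a h p12a, inr a h p34h]) Yl
  have Ycf : InCl rk (LL c ∪ LL f) Y :=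
    H.trans (by simp [inr c f p12f, inl c f p34c]) Yl
  have Zbh : InCl rk (LL b ∪ LL h) Z :=
    H.trans (by simp [inl b h p23b, inr b h p34h]) Zl
  have Zcg : InCl rk (LL c ∪ LL g) Z :=
    H.trans (by simp [inr c g p23g, inl c g p34c]) Zl
  have cAB'X : rk {A, B', X} ≤ 2 := col mag mde ad (inl a g A1) (inr a g B'2) Xag
    (inr d e A2) (inl d e B'1) Xpi
  have cA'BX : rk {A', B, X} ≤ 2 := col mbf mde bd (inr b f A'2) (inl b f B1) Xbf
    (inl d e A'1) (inr d e B2) Xpi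
  have cAC'Y : rk {A, C', Y} ≤ 2 := col mah mde ad (inl a h A1) C'ah Yah
    (inr d e A2) (inl d e C'1) Ypi
  have cA'CY : rk {A', C, Y} ≤ 2 := col mcf mde cd (inr c f A'2) (inl c f C1) Ycf
    (inl d e A'1) (inr d e C2) Ypi
  have cB'CZ : rk {B', C, Z} ≤ 2 := col mcg mde cd (inr c g B'2) (inl c g C1) Zcg
    (inl d e B'1) (inr d e C2) Zpi
  have nA'C' : A' ≠ C' := by
    rintro rfl
    exact H.bad fh mah (H.ne_of_skew ad p12a A'1) p12f A'2 (inl a h p12a) C'ah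
      (fun x hx => inr a h hx)
  have nB'C' : B' ≠ C' := by
    rintro rfl
    exact H.bad gh mah (H.ne_of_skew ad p13a B'1) p13g B'2 (inl a h p13a) C'ah
      (fun x hx => inr a h hx)
  have hcop : rk {B, C', B', C} ≤ 3 := by
    refine (H.rk_le (S := LL d ∪ LL e) ?_).trans mde
    simp [inr d e B2, inl d e C'1, inl d e B'1, inr d e C2]
  obtain ⟨Z', cBC'Z', cB'CZ'⟩ := H.a6 _ _ _ _ hcop
  have hA'nl : ∀ {x y : Pt}, InCl rk (LL e) x → InCl rk (LL e) y → x ≠ y →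
      3 ≤ rk {x, y, A'} := by
    intro x y hx hy hxy
    by_contra hlt
    exact H.no_common ef (H.trans (by simp [hx, hy]) (H.third hxy (by omega))) A'2
  have hB'nl : ∀ {x y : Pt}, InCl rk (LL e) x → InCl rk (LL e) y → x ≠ y →
      3 ≤ rk {x, y, B'} := by
    intro x y hx hy hxy
    by_contra hlt
    exact H.no_common eg (H.trans (by simp [hx, hy]) (H.third hxy (by omega))) B'2
  have cABC : rk {A, B, C} ≤ 2 :=
    (H.rk_le (S := LL e) (by simp [A2, B2, C2])).trans (H.pair_le _ _)
  have cA'B'C' : rk {A', B', C'} ≤ 2 :=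
    (H.rk_le (S := LL d) (by simp [A'1, B'1, C'1])).trans (H.pair_le _ _)
  have h6 : 3 ≤ rk {A, B, C, A', B', C'} :=
    (hA'nl A2 B2 nAB).trans (H.a2 _ _ (by clear * -; intro x; simp; try tauto))
  have cXYZ' : rk {X, Y, Z'} ≤ 2 := hP A B C A' B' C' X Y Z' cABC cA'B'C'
    (H.a5 _ _ nAB) (H.a5 _ _ nAC) (H.a5 _ _ nBC)
    (H.a5 _ _ nA'B') (H.a5 _ _ nA'C') (H.a5 _ _ nB'C')
    (H.a5 _ _ (H.ne_of_skew ad A1 A'1)) (H.a5 _ _ (H.ne_of_skew ad A1 B'1))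
    (H.a5 _ _ (H.ne_of_skew ad A1 C'1))
    (H.a5 _ _ (H.ne_of_skew bd B1 A'1)) (H.a5 _ _ (H.ne_of_skew bd B1 B'1))
    (H.a5 _ _ (H.ne_of_skew bd B1 C'1))
    (H.a5 _ _ (H.ne_of_skew cd C1 A'1)) (H.a5 _ _ (H.ne_of_skew cd C1 B'1))
    (H.a5 _ _ (H.ne_of_skew cd C1 C'1))
    h6 cAB'X cA'BX cAC'Y cA'CY cBC'Z'.le cB'CZ'.le
  have p12pi : ¬ InCl rk (LL d ∪ LL e) p12 := fun hp =>
    H.bad (l := f) (m := e) (by rw [Finset.union_comm]; exact ef) mde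
      (H.ne_of_skew ad p12a A'1) p12f A'2 hp (inl d e A'1) (fun x hx => inr d e hx)
  have cXYZ : rk {X, Y, Z} ≤ 2 := by
    have hX : InCl rk {p12, p23, p34} X := H.mono (by clear * -; intro x; simp; try tauto) Xl
    have hY : InCl rk {p12, p23, p34} Y := H.mono (by clear * -; intro x; simp; try tauto) Yl
    have hZ : InCl rk {p12, p23, p34} Z := H.mono (by clear * -; intro x; simp; try tauto) Zl
    have h4 := H.inter (T := {X, Y, Z}) (S := {p12, p23, p34}) (S' := LL d ∪ LL e)
      (by simp [hX, hY, hZ]) (by simp [Xpi, Ypi, Zpi])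
    have h5 : rk {p12, p23, p34} ≤ 3 := (H.a1 _).trans Finset.card_le_three
    have h6 : ¬ rk ({p12, p23, p34} ∪ (LL d ∪ LL e)) ≤ 3 := fun hle =>
      H.bad (l := f) (m := e) (by rw [Finset.union_comm]; exact ef) hle
        (H.ne_of_skew ad p12a A'1) p12f A'2 (H.mem (by simp))
        (H.mono Finset.subset_union_right (inl d e A'1))
        (fun x hx => H.mono Finset.subset_union_right (inr d e hx))
    omega
  have tri : 3 ≤ rk {p12, p23, p34} := by
    by_contra hlt
    have h1 : InCl rk (LL a ∪ LL g) p34 :=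
      H.trans (by simp [inl a g p12a, inr a g p23g]) (H.third n1223 (by omega))
    exact H.bad (l := c) (m := a) (by rw [Finset.union_comm]; exact ac) mag
      (H.ne_of_skew gh p33g p34h) p33c p34c (inr a g p33g) h1 (fun x hx => inl a g hx)
  have nXY : X ≠ Y := by
    rintro rfl
    have h4 := H.inter (T := {X, p12}) (S := {p12, p23}) (S' := {p12, p34})
      (by simp [Xl, H.mem (S := {p12, p23}) (p := p12) (by simp)])
      (by simp [Yl, H.mem (S := {p12, p34}) (p := p12) (by simp)])
    have h5 := H.a2 {p12, p23, p34} ({p12, p23} ∪ {p12, p34}) (by clear * -; intro x; simp; try tauto)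
    have h6 := H.pair_le p12 p23
    have h7 := H.pair_le p12 p34
    have := H.eq_of (p := X) (q := p12) (by omega)
    subst this
    exact p12pi Xpi
  have nB'C : B' ≠ C := (H.ne_of_skew cd C1 B'1).symm
  have nAB' : A ≠ B' := H.ne_of_skew ad A1 B'1
  have hXB'C : ¬ InCl rk {B', C} X := by
    intro hX
    have hX2 : InCl rk {A, B'} X := H.third nAB' cAB'X
    have h4 := H.inter (T := {X, B'}) (S := {B', C}) (S' := {A, B'})
      (by simp [hX, H.mem (S := {B', C}) (p := B') (by simp)])
      (by simp [hX2, H.mem (S := {A, B'}) (p := B') (by simp)])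
    have h5 := (hB'nl A2 C2 nAC).trans
      (H.a2 _ ({B', C} ∪ {A, B'}) (by clear * -; intro x; simp; try tauto))
    have h6 := H.pair_le B' C
    have h7 := H.pair_le A B'
    have := H.eq_of (p := X) (q := B') (by omega)
    subst this
    have n : X ≠ p23 := (H.ne_of_skew bd p23b B'1).symm
    have h8 : InCl rk {X, p23} p12 := by
      refine H.exch (S := {p12, p23}) ?_ ?_ (H.mem (by simp))
      · simp [Xl, H.mem (S := {p12, p23}) (p := p23) (by simp)]
      · rw [H.a5 _ _ n]; exact H.pair_le _ _
    exact H.no_common fg p12f (H.trans (by simp [B'2, p23g]) h8)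
  have hZZ : Z = Z' := by
    by_contra hne
    have h1 : InCl rk {X, Y} Z := H.third nXY cXYZ
    have h2 : InCl rk {X, Y} Z' := H.third nXY cXYZ'
    have h3 : InCl rk {Z, Z'} X := by
      refine H.exch (S := {X, Y}) (by simp [h1, h2]) ?_ (H.mem (by simp))
      rw [H.a5 _ _ hne]; exact H.pair_le _ _
    exact hXB'C (H.trans (by simp [H.third nB'C cB'CZ, H.third nB'C cB'CZ'.le]) h3)
  subst hZZ
  have nBZ : B ≠ Z := by
    rintro rfl
    have e1 : ({B', C, B} : Finset Pt) = {B, C, B'} := by clear * -; ext x; simp; tauto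
    have := hB'nl B2 C2 nBC
    rw [e1] at cB'CZ
    omega
  have C'bh : InCl rk (LL b ∪ LL h) C' := by
    have e1 : ({B, C', Z} : Finset Pt) = {B, Z, C'} := by clear * -; ext x; simp; tauto
    rw [e1] at cBC'Z'
    exact H.trans (by simp [inl b h B1, Zbh]) (H.third nBZ cBC'Z'.le)
  have C'h : rk (insert C' (LL h)) ≤ 2 := by
    have h4 := H.inter (T := insert C' (LL h)) (S := LL a ∪ LL h) (S' := LL b ∪ LL h)
      (by
        intro x hx
        rcases Finset.mem_insert.1 hx with rfl | hx
        · exact C'ah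
        · exact inr a h (H.mem hx))
      (by
        intro x hx
        rcases Finset.mem_insert.1 hx with rfl | hx
        · exact C'bh
        · exact inr b h (H.mem hx))
    have h5 := H.a2 (LL a ∪ LL b) ((LL a ∪ LL h) ∪ (LL b ∪ LL h)) (by clear * -; intro x; simp; try tauto)
    omega
  have h7 := H.inter (T := {C'}) (S := LL d) (S' := insert C' (LL h))
    (by simp [C'1]) (by simp [H.mem (S := insert C' (LL h)) (p := C') (by simp)])
  have h8 := H.a2 (LL d ∪ LL h) (LL d ∪ insert C' (LL h)) (by clear * -; intro x; simp; try tauto)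
  have := H.a4 C'
  omega

/-- Two transversals of three pairwise skew lines are skew or equal. -/
theorem RkAx.dich (H : RkAx rk) {a d e f g : Pt × Pt}
    (la : rk (LL a) = 2) (ld : rk (LL d) = 2)
    (le : rk (LL e) = 2) (lf : rk (LL f) = 2) (lg : rk (LL g) = 2)
    (ef : rk (LL e ∪ LL f) = 4) (eg : rk (LL e ∪ LL g) = 4) (fg : rk (LL f ∪ LL g) = 4)
    (mae : rk (LL a ∪ LL e) ≤ 3) (maf : rk (LL a ∪ LL f) ≤ 3) (mag : rk (LL a ∪ LL g) ≤ 3)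
    (mde : rk (LL d ∪ LL e) ≤ 3) (mdf : rk (LL d ∪ LL f) ≤ 3) (mdg : rk (LL d ∪ LL g) ≤ 3)
    (hm : rk (LL a ∪ LL d) ≤ 3) : ∀ x ∈ LL d, InCl rk (LL a) x := by
  obtain ⟨p, pa, pe⟩ := H.meet_pt la le mae
  obtain ⟨q, qa, qf⟩ := H.meet_pt la lf maf
  obtain ⟨r, ra, rg⟩ := H.meet_pt la lg mag
  obtain ⟨p', pd, pe'⟩ := H.meet_pt ld le mde
  obtain ⟨q', qd, qf'⟩ := H.meet_pt ld lf mdf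
  obtain ⟨r', rd, rg'⟩ := H.meet_pt ld lg mdg
  have both : ∀ {k l : Pt × Pt} {s s' t t' : Pt}, rk (LL k ∪ LL l) = 4 →
      InCl rk (LL a) s → InCl rk (LL k) s → InCl rk (LL d) s' → InCl rk (LL k) s' →
      InCl rk (LL a) t → InCl rk (LL l) t → InCl rk (LL d) t' → InCl rk (LL l) t' →
      s = s' ∨ t = t' := by
    intro k l s s' t t' hkl sa sk sd sk' ta tl td tl'
    by_contra hcon
    push Not at hcon
    exact H.bad hkl hm hcon.1 sk sk' (H.mono Finset.subset_union_left sa)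
      (H.mono Finset.subset_union_right sd) (fun x hx =>
        H.line_in hcon.2 tl tl' (H.mono Finset.subset_union_left ta)
          (H.mono Finset.subset_union_right td) hx)
  have fin : ∀ {s t : Pt}, s ≠ t → InCl rk (LL a) s → InCl rk (LL a) t →
      InCl rk (LL d) s → InCl rk (LL d) t → ∀ x ∈ LL d, InCl rk (LL a) x :=
    fun hne sa ta sd td x hx => H.line_in hne sd td sa ta (H.mem hx)
  have b1 := both ef pa pe pd pe' qa qf qd qf'
  have b2 := both eg pa pe pd pe' ra rg rd rg'
  have b3 := both fg qa qf qd qf' ra rg rd rg'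
  by_cases hp : p = p'
  · subst hp
    rcases b3 with rfl | rfl
    · exact fin (H.ne_of_skew ef pe qf) pa qa pd qd
    · exact fin (H.ne_of_skew eg pe rg) pa ra pd rd
  · have hq := b1.resolve_left hp
    have hr := b2.resolve_left hp
    subst hq hr
    exact fin (H.ne_of_skew fg qf rg) qa ra qd rd

theorem RkAx.meet_of_in (H : RkAx rk) {a d h : Pt × Pt}
    (hin : ∀ x ∈ LL d, InCl rk (LL a) x) (m : rk (LL a ∪ LL h) ≤ 3) :
    rk (LL d ∪ LL h) ≤ 3 := by
  refine (H.rk_le (S := LL a ∪ LL h) ?_).trans m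
  intro x hx
  rcases Finset.mem_union.1 hx with hx | hx
  · exact H.mono Finset.subset_union_left (hin x hx)
  · exact H.mem (Finset.mem_union_right _ hx)

end helpers

/-- In a 3D projective incidence space (given by the full rank
axiom system (A1)–(A10)), Pappus's property implies Dandelin–Gallucci's
property. -/
theorem stmt_16 {Pt : Type*} [DecidableEq Pt] (rk : Finset Pt → ℕ)
    (hA1 : ∀ X : Finset Pt, rk X ≤ X.card)
    (hA2 : ∀ X Y : Finset Pt, X ⊆ Y → rk X ≤ rk Y)
    (hA3 : ∀ X Y : Finset Pt, rk (X ∪ Y) + rk (X ∩ Y) ≤ rk X + rk Y)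
    (hA4 : ∀ p : Pt, rk {p} = 1)
    (hA5 : ∀ p q : Pt, p ≠ q → rk {p, q} = 2)
    (hA6 : ∀ A B C D : Pt, rk {A, B, C, D} ≤ 3 →
      ∃ J : Pt, rk {A, B, J} = 2 ∧ rk {C, D, J} = 2)
    (hA7 : ∀ A B : Pt, ∃ C : Pt,
      rk {A, B, C} = 2 ∧ rk {B, C} = 2 ∧ rk {A, C} = 2)
    (hA8 : ∃ P₁ P₂ P₃ P₄ : Pt, rk {P₁, P₂, P₃, P₄} = 4)
    (hA9 : ∀ X : Finset Pt, rk X ≤ 4)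
    (hA10 : ∀ A B C A' B' : Pt, rk {A, B, C} = 3 → rk {A', B'} = 2 →
      ∃ M : Pt, rk {A, B, C, M} = 3 ∧ rk {A', B', M} = 2)
    (hPappus : PappusRank rk) :
    DGRank rk := by
  have H : RkAx rk := ⟨hA1, hA2, hA3, hA4, hA5, hA6, hA10⟩
  intro a b c e f g d h la lb lc le lf lg ld lh ab ac bc ef eg fg mae maf mag mbe mbf mbg
    mce mcf mcg mde mdf mdg mha mhb mhc
  unfold SkewRk at ab ac bc ef eg fg
  unfold MeetRk at mae maf mag mbe mbf mbg mce mcf mcg mde mdf mdg mha mhb mhc ⊢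
  rw [four_eq] at ab ac bc ef eg fg mae maf mag mbe mbf mbg mce mcf mcg mde mdf mdg mha mhb mhc ⊢
  change rk (LL _) = 2 at la lb lc le lf lg ld lh
  rw [Finset.union_comm] at mha mhb mhc
  have sk : ∀ {k l : Pt × Pt}, ¬ rk (LL k ∪ LL l) ≤ 3 → rk (LL k ∪ LL l) = 4 := by
    intro k l hn
    have := hA9 (LL k ∪ LL l)
    omega
  by_cases ad : rk (LL a ∪ LL d) ≤ 3
  · exact H.meet_of_in (H.dich la ld le lf lg ef eg fg mae maf mag mde mdf mdg ad) mha
  by_cases bd : rk (LL b ∪ LL d) ≤ 3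
  · exact H.meet_of_in (H.dich lb ld le lf lg ef eg fg mbe mbf mbg mde mdf mdg bd) mhb
  by_cases cd : rk (LL c ∪ LL d) ≤ 3
  · exact H.meet_of_in (H.dich lc ld le lf lg ef eg fg mce mcf mcg mde mdf mdg cd) mhc
  have flip : ∀ {k l : Pt × Pt}, rk (LL k ∪ LL l) ≤ 3 → rk (LL l ∪ LL k) ≤ 3 := by
    intro k l hk
    rwa [Finset.union_comm]
  by_cases fh : rk (LL f ∪ LL h) ≤ 3
  · exact flip (H.meet_of_in (H.dich lf lh la lb lc ab ac bc (flip maf) (flip mbf) (flip mcf)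
      (flip mha) (flip mhb) (flip mhc) fh) (flip mdf))
  by_cases gh : rk (LL g ∪ LL h) ≤ 3
  · exact flip (H.meet_of_in (H.dich lg lh la lb lc ab ac bc (flip mag) (flip mbg) (flip mcg)
      (flip mha) (flip mhb) (flip mhc) gh) (flip mdg))
  obtain ⟨A, A1, A2⟩ := H.meet_pt la le mae
  obtain ⟨B, B1, B2⟩ := H.meet_pt lb le mbe
  obtain ⟨C, C1, C2⟩ := H.meet_pt lc le mce
  obtain ⟨A', A'1, A'2⟩ := H.meet_pt ld lf mdf
  obtain ⟨B', B'1, B'2⟩ := H.meet_pt ld lg mdg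
  obtain ⟨p12, p12a, p12f⟩ := H.meet_pt la lf maf
  obtain ⟨p13, p13a, p13g⟩ := H.meet_pt la lg mag
  obtain ⟨p23, p23b, p23g⟩ := H.meet_pt lb lg mbg
  obtain ⟨p33, p33c, p33g⟩ := H.meet_pt lc lg mcg
  obtain ⟨p34, p34c, p34h⟩ := H.meet_pt lc lh mhc
  exact H.main hPappus la ld ab ac bc (sk ad) (sk bd) (sk cd) ef eg fg (sk fh) (sk gh)
    mag mha mbf mhb mcf mcg mde A1 A2 B1 B2 C1 C2 A'1 A'2 B'1 B'2 p12a p12f p13a p13g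
    p23b p23g p33c p33g p34c p34h
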